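/- For odd n ≥ 9, the strict inequality (n+1)·n·(n−1)·(n−3)²·(n−7)·(n²−7n+1)/2048 < c_8(RLT_n) holds if and only if n ≥ 39, where c_8(RLT_n) = (n+1)·n·(n−1)·(n−3)·(n−5)·(n−7)·(83n²−575n+510)/161280. In particular, for any doubly-regular tournament DR_n of order n ≥ 39 one has c_8(DR_n) < c_8(RLT_n), while c_8(RLT_n) < c_8(DR_n) for doubly-regular tournaments of orders 11 ≤ n ≤ 35. -/

import Mathlib

/-- A tournament on the vertex type `V`. -/
structure Tournament (V : Type*) where
  r : V → V → Prop
  dec : DecidableRel r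
  irrefl : ∀ i, ¬ r i i
  total : ∀ i j, i ≠ j → (r i j ↔ ¬ r j i)

attribute [instance] Tournament.dec

/-- A doubly-regular tournament of order `4t+3`: every pair of distinct vertices
jointly dominates exactly `t` vertices. -/
def Tournament.IsDoublyRegular {V : Type*} (T : Tournament V) (t : ℕ) : Prop :=
  ∀ i j : V, i ≠ j → Nat.card {k : V // T.r i k ∧ T.r j k} = t

/-- The dominance relation of the regular locally transitive tournament `RLT_n`
on `ZMod n` (for odd `n`). -/
def rltAdj (n : ℕ) (i j : ZMod n) : Prop :=
  (j - i).val ∈ Finset.Icc 1 ((n - 1) / 2)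

/-- The number of directed `m`-cycles of the relation `r`: each `m`-cycle corresponds
to exactly `m` injective cyclic sequences (one for each rotation). -/
noncomputable def numCycles {V : Type*} (r : V → V → Prop) (m : ℕ) : ℕ :=
  Nat.card {γ : ZMod m → V // Function.Injective γ ∧ ∀ k, r (γ k) (γ (k + 1))} / m

theorem Fin.sum_pi_eight {V M : Type*} [Fintype V] [AddCommMonoid M] (F : (Fin 8 → V) → M) :
    ∑ γ, F γ = ∑ a, ∑ b, ∑ c, ∑ d, ∑ e, ∑ f, ∑ g, ∑ h, F ![a, b, c, d, e, f, g, h] := by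
  have step : ∀ (k : ℕ) (G : (Fin (k + 1) → V) → M),
      ∑ γ, G γ = ∑ a, ∑ γ : Fin k → V, G (Matrix.vecCons a γ) := by
    intro k G
    rw [← (Fin.consEquiv fun _ => V).sum_comp, Fintype.sum_prod_type]
    rfl
  simp only [step, Fintype.sum_unique]
  simp only [Matrix.empty_eq]

/-- Expansion of a weighted sum over closed sequences of length eight. -/
theorem sum_closedWalk_eight {V : Type*} [Fintype V] (A : V → V → ℚ)
    (d : V → V → V → V → V → V → V → V → ℚ) :
    ∑ γ : Fin 8 → V, (∏ k, A (γ k) (γ (k + 1))) *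
        d (γ 0) (γ 1) (γ 2) (γ 3) (γ 4) (γ 5) (γ 6) (γ 7) =
      ∑ a, ∑ b, ∑ c, ∑ d', ∑ e, ∑ f, ∑ g, ∑ h,
        (A a b * A b c * A c d' * A d' e * A e f * A f g * A g h * A h a) *
          d a b c d' e f g h := by
  rw [Fin.sum_pi_eight]
  simp only [Fin.prod_univ_eight]
  rfl

section Inclusion

/-- The signed combination of coincidence indicators whose sum over the rotations of a closed
walk of length eight in a tournament is `8` if the walk is a cycle and `0` otherwise. -/
def coincidenceWeight (d : Fin 8 → Fin 8 → ℚ) : ℚ :=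
  1 - 8 * d 0 3 - 4 * d 0 4 + 2 * (d 0 4 * d 2 6) + 8 * (d 0 3 * d 1 5) + 8 * (d 0 3 * d 1 6)
    + 8 * (d 0 4 * d 1 6) + 8 * (d 0 3 * d 1 4) + 4 * (d 0 4 * d 1 5)
    - 8 * (d 0 5 * d 3 6 * d 4 7) - 8 * (d 0 5 * d 2 6 * d 4 7) - 8 * (d 0 5 * d 2 6 * d 3 7)
    - 4 * (d 0 4 * d 2 6 * d 3 7) + d 0 4 * d 1 5 * d 2 6 * d 3 7

/-- The table of coincidences with prescribed values `s` at distance three and `t` at distance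
four. -/
def coincidenceTable (s : Fin 8 → Bool) (t : Fin 8 → Bool) (i j : Fin 8) : Bool :=
  if j = i + 3 then s i else if j = i + 5 then s j else if j = i + 4 then t i else false

theorem sum_coincidenceWeight_table (a₀ a₁ a₂ a₃ a₄ a₅ a₆ a₇ b₀ b₁ b₂ b₃ : Bool) :
    (∀ k : Fin 8, ¬ (![a₀, a₁, a₂, a₃, a₄, a₅, a₆, a₇] k = true ∧
        (![a₀, a₁, a₂, a₃, a₄, a₅, a₆, a₇] (k + 3) = true ∨
        ![a₀, a₁, a₂, a₃, a₄, a₅, a₆, a₇] (k + 4) = true ∨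
        ![b₀, b₁, b₂, b₃, b₀, b₁, b₂, b₃] k = true ∨
        ![b₀, b₁, b₂, b₃, b₀, b₁, b₂, b₃] (k + 3) = true))) →
    ∑ k : Fin 8, coincidenceWeight (fun i j => if coincidenceTable
      ![a₀, a₁, a₂, a₃, a₄, a₅, a₆, a₇] ![b₀, b₁, b₂, b₃, b₀, b₁, b₂, b₃] (i + k) (j + k) = true
      then 1 else 0) =
    if (∀ k : Fin 8, ![a₀, a₁, a₂, a₃, a₄, a₅, a₆, a₇] k = false ∧
      ![b₀, b₁, b₂, b₃, b₀, b₁, b₂, b₃] k = false) then 8 else 0 := by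
  revert a₀ a₁ a₂ a₃ a₄ a₅ a₆ a₇ b₀ b₁ b₂ b₃
  decide +kernel

theorem coincidenceWeight_congr {d d' : Fin 8 → Fin 8 → ℚ}
    (h : ∀ i j, j - i = 3 ∨ j - i = 4 ∨ j - i = 5 → d i j = d' i j) :
    coincidenceWeight d = coincidenceWeight d' := by
  unfold coincidenceWeight
  rw [h 0 3 (by decide), h 0 4 (by decide), h 2 6 (by decide), h 1 5 (by decide),
    h 1 6 (by decide), h 1 4 (by decide), h 0 5 (by decide), h 3 6 (by decide),
    h 4 7 (by decide), h 3 7 (by decide)]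

variable {V : Type*} [DecidableEq V]

theorem sum_coincidenceWeight_closedWalk {r : V → V → Prop} (irrefl : ∀ i, ¬ r i i)
    (asymm : ∀ i j, r i j → ¬ r j i) {γ : Fin 8 → V} (hγ : ∀ k, r (γ k) (γ (k + 1)))
    [Decidable (Function.Injective γ)] :
    ∑ k : Fin 8, coincidenceWeight (fun i j => if γ (i + k) = γ (j + k) then 1 else 0) =
      if Function.Injective γ then 8 else 0 := by
  have h₁ : ∀ k, γ k ≠ γ (k + 1) := fun k h => irrefl _ (h ▸ hγ k)
  have h₂ : ∀ k, γ k ≠ γ (k + 2) := fun k h => asymm _ _ (hγ k) (by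
    have := hγ (k + 1)
    rwa [add_assoc, show (1 : Fin 8) + 1 = 2 from rfl, ← h] at this)
  set s : Fin 8 → Bool := fun k => decide (γ k = γ (k + 3)) with hs
  set t : Fin 8 → Bool := fun k => decide (γ k = γ (k + 4)) with ht
  have hs' : ![s 0, s 1, s 2, s 3, s 4, s 5, s 6, s 7] = s := by
    funext k; fin_cases k <;> rfl
  have ht₄ : ∀ k, t (k + 4) = t k := fun k => by
    simp only [ht, add_assoc, show (4 : Fin 8) + 4 = 0 from rfl, add_zero, eq_comm]
  have ht' : ![t 0, t 1, t 2, t 3, t 0, t 1, t 2, t 3] = t := by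
    funext k
    fin_cases k
    exacts [rfl, rfl, rfl, rfl, (ht₄ 0).symm, (ht₄ 1).symm, (ht₄ 2).symm, (ht₄ 3).symm]
  have key := sum_coincidenceWeight_table (s 0) (s 1) (s 2) (s 3) (s 4) (s 5) (s 6) (s 7)
    (t 0) (t 1) (t 2) (t 3)
  rw [hs', ht'] at key
  have hinj : (∀ k, s k = false ∧ t k = false) ↔ Function.Injective γ := by
    simp only [hs, ht, decide_eq_false_iff_not]
    constructor
    · intro h i j hij
      by_contra hne
      have hcases : ∀ i j : Fin 8, i ≠ j → j = i + 1 ∨ j = i + 2 ∨ j = i + 3 ∨ j = i + 4 ∨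
          i = j + 3 ∨ i = j + 2 ∨ i = j + 1 := by decide
      rcases hcases i j hne with rfl | rfl | rfl | rfl | rfl | rfl | rfl
      exacts [h₁ _ hij, h₂ _ hij, (h _).1 hij, (h _).2 hij, (h _).1 hij.symm, h₂ _ hij.symm,
        h₁ _ hij.symm]
    · intro h k
      have h₃ : ∀ k : Fin 8, k ≠ k + 3 ∧ k ≠ k + 4 := by decide
      exact ⟨fun e => (h₃ k).1 (h e), fun e => (h₃ k).2 (h e)⟩
  refine Eq.trans ?_ ((key ?_).trans (by simp only [hinj]))
  · refine Finset.sum_congr rfl fun k _ => coincidenceWeight_congr fun i j hij => ?_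
    obtain ⟨d, rfl⟩ : ∃ d, j = i + d := ⟨j - i, by abel⟩
    simp only [add_sub_cancel_left] at hij
    rw [show i + d + k = (i + k) + d by abel]
    generalize i + k = l
    have hl : ∀ l : Fin 8, l + 5 ≠ l + 3 ∧ l + 4 ≠ l + 3 ∧ l + 4 ≠ l + 5 ∧ l + 5 + 3 = l := by
      decide
    rcases hij with rfl | rfl | rfl
    · simp [coincidenceTable, hs]
    · simp [coincidenceTable, ht]
    · simp [coincidenceTable, hs, (hl l).2.2.2, eq_comm]
  · intro k
    have e₁ : k + 3 + 3 = k + 4 + 2 := by abel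
    have e₂ : k + 4 + 3 + 1 = k := by
      simp only [add_assoc]; exact add_zero k
    have e₃ : k + 3 + 4 + 1 = k := by
      simp only [add_assoc]; exact add_zero k
    have e₄ : k + 3 + 3 + 2 = k := by
      simp only [add_assoc]; exact add_zero k
    have e₅ : k + 3 + 1 = k + 4 := by abel
    simp only [hs, ht, decide_eq_true_eq, not_and, not_or]
    intro h
    refine ⟨fun h' => ?_, fun h' => ?_, fun h' => ?_, fun h' => ?_⟩
    · exact h₂ (k + 3 + 3) (by rw [e₄, ← h', ← h])
    · have a := hγ (k + 3)
      have b := hγ (k + 4 + 3)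
      rw [e₂, ← h', h] at b
      rw [e₅] at a
      exact asymm _ _ a b
    · exact h₁ (k + 3) (by rw [e₅, ← h, ← h'])
    · exact h₁ (k + 3 + 4) (by rw [e₃, ← h', ← h])

variable [Fintype V]

theorem sum_closedWalk_injective (A : V → V → ℚ) (r : V → V → Prop) [DecidableRel r]
    (hA : ∀ i j, A i j = if r i j then 1 else 0)
    (irrefl : ∀ i, ¬ r i i) (asymm : ∀ i j, r i j → ¬ r j i) :
    (Nat.card {γ : Fin 8 → V // Function.Injective γ ∧ ∀ k, r (γ k) (γ (k + 1))} : ℚ) =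
      ∑ γ : Fin 8 → V, (∏ k, A (γ k) (γ (k + 1))) *
        coincidenceWeight (fun i j => if γ i = γ j then 1 else 0) := by
  classical
  have hw : ∀ γ : Fin 8 → V, ∏ k, A (γ k) (γ (k + 1)) =
      if ∀ k, r (γ k) (γ (k + 1)) then 1 else 0 := by
    intro γ
    simp only [hA, Finset.prod_boole, Finset.mem_univ, true_imp_iff]
  have hrot : ∀ k : Fin 8, ∑ γ : Fin 8 → V, (∏ k, A (γ k) (γ (k + 1))) *
        coincidenceWeight (fun i j => if γ (i + k) = γ (j + k) then 1 else 0) =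
      ∑ γ : Fin 8 → V, (∏ k, A (γ k) (γ (k + 1))) *
        coincidenceWeight (fun i j => if γ i = γ j then 1 else 0) := by
    intro k
    refine Fintype.sum_equiv ((Equiv.addRight k).symm.arrowCongr (Equiv.refl V)) _ _ fun γ => ?_
    congr 1
    refine Fintype.prod_equiv (Equiv.addRight k).symm _ _ fun i => ?_
    simp [add_right_comm]
  have hsum : (8 : ℚ) * ∑ γ : Fin 8 → V, (∏ k, A (γ k) (γ (k + 1))) *
        coincidenceWeight (fun i j => if γ i = γ j then 1 else 0) =
      ∑ γ : Fin 8 → V, if Function.Injective γ ∧ ∀ k, r (γ k) (γ (k + 1)) then 8 else 0 := by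
    trans ∑ k : Fin 8, ∑ γ : Fin 8 → V, (∏ k, A (γ k) (γ (k + 1))) *
        coincidenceWeight (fun i j => if γ (i + k) = γ (j + k) then 1 else 0)
    · simp only [hrot, Finset.sum_const, Finset.card_univ, Fintype.card_fin, nsmul_eq_mul,
        Nat.cast_ofNat]
    · rw [Finset.sum_comm]
      refine Finset.sum_congr rfl fun γ _ => ?_
      rw [← Finset.mul_sum, hw]
      by_cases h : ∀ k, r (γ k) (γ (k + 1))
      · rw [if_pos h, one_mul, sum_coincidenceWeight_closedWalk irrefl asymm h]
        simp [h]
      · simp [h]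
  have : (Nat.card {γ : Fin 8 → V // Function.Injective γ ∧ ∀ k, r (γ k) (γ (k + 1))} : ℚ) =
      ∑ γ : Fin 8 → V, if Function.Injective γ ∧ ∀ k, r (γ k) (γ (k + 1)) then 1 else 0 := by
    rw [Nat.card_eq_fintype_card, Fintype.card_subtype, Finset.sum_boole]
  rw [this]
  have h₈ : ∀ p : Prop, [Decidable p] → (if p then 8 else 0 : ℚ) = 8 * if p then 1 else 0 := by
    intro p _; split_ifs <;> norm_num
  simp only [h₈, ← Finset.mul_sum] at hsum
  linarith

/-- The contribution of a pair `(a, b)` of vertices to the number of closed injective walks of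
length eight: `e` is the adjacency of `(a, b)`, `pₖ` and `qₖ` are the numbers of walks of length
`k` from `a` to `b` and from `b` to `a`, `s₃` is the number of closed walks of length three at `a`,
and `ρ` is the number of walks of length three from `b` to `a` with a chord. -/
def walkPairWeight (e p₂ q₂ p₃ q₃ p₄ q₄ s₃ ρ : ℚ) : ℚ :=
  p₄ * q₄ - 8 * (p₂ * (s₃ * q₃)) + 2 * (p₂ * q₂ * p₂ * q₂) + 8 * (e * q₂ * p₂ * q₃)
    + 8 * (e * q₂ * p₃ * q₂) + 8 * (e * q₃ * p₂ * q₂) + 8 * (e * q₂ * q₄) + 4 * (e * q₃ * q₃)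
    - 8 * (e * p₃ * q₂) - 16 * (e * p₂ * ρ) - 4 * (p₂ * q₂ * p₂) + p₂ * q₂

set_option maxHeartbeats 1000000 in
open Matrix in
/-- The number of closed injective walks of length eight of a loopless antisymmetric relation, in
terms of the numbers of walks of length at most four. -/
theorem card_closedWalk_eight (A : Matrix V V ℚ) (r : V → V → Prop) [DecidableRel r]
    (hA : ∀ i j, A i j = if r i j then 1 else 0)
    (irrefl : ∀ i, ¬ r i i) (asymm : ∀ i j, r i j → ¬ r j i) (P₂ P₃ P₄ R : Matrix V V ℚ)
    (h₂ : P₂ = A * A) (h₃ : P₃ = A * P₂) (h₄ : P₄ = A * P₃) (hR : R = A * (A ⊙ P₂)) :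
    (Nat.card {γ : Fin 8 → V // Function.Injective γ ∧ ∀ k, r (γ k) (γ (k + 1))} : ℚ) =
      ∑ a, ∑ b, walkPairWeight (A a b) (P₂ a b) (P₂ b a) (P₃ a b) (P₃ b a) (P₄ a b) (P₄ b a)
          (P₃ a a) (R b a) - 4 * ∑ a, P₄ a a * P₄ a a := by
  simp only [walkPairWeight]
  have idem : ∀ i j, A i j ^ 2 = A i j := by
    intro i j; rw [hA]; split_ifs <;> norm_num
  have hP₂ : ∀ a b, P₂ a b = ∑ x, A a x * A x b := fun a b => by rw [h₂, Matrix.mul_apply]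
  have hP₃ : ∀ a b, P₃ a b = ∑ x, A a x * P₂ x b := fun a b => by rw [h₃, Matrix.mul_apply]
  have hP₄ : ∀ a b, P₄ a b = ∑ x, A a x * P₃ x b := fun a b => by rw [h₄, Matrix.mul_apply]
  have hR' : ∀ a b, R a b = ∑ x, A a x * (A x b * P₂ x b) := fun a b => by
    rw [hR, Matrix.mul_apply]; rfl
  have comm₃ : ∀ F : V → V → V → ℚ, ∑ x, ∑ y, ∑ z, F x y z = ∑ z, ∑ x, ∑ y, F x y z := fun F =>
    (Finset.sum_congr rfl fun x _ => Finset.sum_comm).trans Finset.sum_comm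
  have comm₄ : ∀ F : V → V → V → V → ℚ,
      ∑ x, ∑ y, ∑ z, ∑ w, F x y z w = ∑ w, ∑ x, ∑ y, ∑ z, F x y z w := fun F =>
    (Finset.sum_congr rfl fun x _ => comm₃ _).trans Finset.sum_comm
  have no_coincidence : ∑ γ : Fin 8 → V, (∏ k, A (γ k) (γ (k + 1))) * 1 =
      ∑ a, ∑ e, P₄ a e * P₄ e a := by
    refine (sum_closedWalk_eight A fun _ _ _ _ _ _ _ _ => 1).trans ?_
    simp only [mul_one]
    refine Finset.sum_congr rfl fun a _ => (comm₄ _).trans (Finset.sum_congr rfl fun e _ => ?_)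
    simp only [hP₄, hP₃, hP₂, mul_assoc, Finset.sum_mul]
    simp only [Finset.mul_sum]
  have coincide_03 : ∑ γ : Fin 8 → V, (∏ k, A (γ k) (γ (k + 1))) *
        (if γ 0 = γ 3 then 1 else 0) =
      ∑ a, ∑ f, P₂ a f * (P₃ a a * P₃ f a) := by
    refine (sum_closedWalk_eight A fun a _ _ d _ _ _ _ =>
      (if a = d then 1 else 0)).trans ?_
    simp only [mul_ite, mul_one, mul_zero, Finset.sum_ite_irrel, Finset.sum_const_zero,
      Finset.sum_ite_eq, Finset.mem_univ, if_true]
    refine Finset.sum_congr rfl fun a _ => (comm₄ _).trans (Finset.sum_congr rfl fun e _ => ?_)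
    rw [mul_left_comm]
    simp only [hP₃, hP₂, mul_assoc, Finset.sum_mul]
    simp only [Finset.mul_sum]
  have coincide_04 : ∑ γ : Fin 8 → V, (∏ k, A (γ k) (γ (k + 1))) *
        (if γ 0 = γ 4 then 1 else 0) =
      ∑ a, P₄ a a * P₄ a a := by
    refine (sum_closedWalk_eight A fun a _ _ _ e _ _ _ =>
      (if a = e then 1 else 0)).trans ?_
    simp only [mul_ite, mul_one, mul_zero, Finset.sum_ite_irrel, Finset.sum_const_zero,
      Finset.sum_ite_eq, Finset.mem_univ, if_true]
    simp only [hP₄, hP₃, hP₂, mul_assoc, Finset.sum_mul]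
    simp only [Finset.mul_sum]
  have coincide_04_26 : ∑ γ : Fin 8 → V, (∏ k, A (γ k) (γ (k + 1))) *
        ((if γ 0 = γ 4 then 1 else 0) * (if γ 2 = γ 6 then 1 else 0)) =
      ∑ a, ∑ c, P₂ a c * P₂ c a * P₂ a c * P₂ c a := by
    refine (sum_closedWalk_eight A fun a _ c _ e _ g _ =>
      (if a = e then 1 else 0) * (if c = g then 1 else 0)).trans ?_
    simp only [mul_ite, mul_one, mul_zero, Finset.sum_ite_irrel, Finset.sum_const_zero,
      Finset.sum_ite_eq, Finset.mem_univ, if_true]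
    refine Finset.sum_congr rfl fun a _ =>
      Finset.sum_comm.trans (Finset.sum_congr rfl fun c _ => ?_)
    simp only [hP₂, mul_assoc, Finset.sum_mul]
    simp only [Finset.mul_sum]
  have coincide_03_15 : ∑ γ : Fin 8 → V, (∏ k, A (γ k) (γ (k + 1))) *
        ((if γ 0 = γ 3 then 1 else 0) * (if γ 1 = γ 5 then 1 else 0)) =
      ∑ a, ∑ b, A a b * P₂ b a * P₂ a b * P₃ b a := by
    refine (sum_closedWalk_eight A fun a b _ d _ f _ _ =>
      (if a = d then 1 else 0) * (if b = f then 1 else 0)).trans ?_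
    simp only [mul_ite, mul_one, mul_zero, Finset.sum_ite_irrel, Finset.sum_const_zero,
      Finset.sum_ite_eq, Finset.mem_univ, if_true]
    simp only [hP₃, hP₂, mul_assoc, Finset.sum_mul]
    simp only [Finset.mul_sum]
  have coincide_03_16 : ∑ γ : Fin 8 → V, (∏ k, A (γ k) (γ (k + 1))) *
        ((if γ 0 = γ 3 then 1 else 0) * (if γ 1 = γ 6 then 1 else 0)) =
      ∑ a, ∑ b, A a b * P₂ b a * P₃ a b * P₂ b a := by
    refine (sum_closedWalk_eight A fun a b _ d _ _ g _ =>
      (if a = d then 1 else 0) * (if b = g then 1 else 0)).trans ?_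
    simp only [mul_ite, mul_one, mul_zero, Finset.sum_ite_irrel, Finset.sum_const_zero,
      Finset.sum_ite_eq, Finset.mem_univ, if_true]
    simp only [hP₃, hP₂, mul_assoc, Finset.sum_mul]
    simp only [Finset.mul_sum]
  have coincide_04_16 : ∑ γ : Fin 8 → V, (∏ k, A (γ k) (γ (k + 1))) *
        ((if γ 0 = γ 4 then 1 else 0) * (if γ 1 = γ 6 then 1 else 0)) =
      ∑ a, ∑ b, A a b * P₃ b a * P₂ a b * P₂ b a := by
    refine (sum_closedWalk_eight A fun a b _ _ e _ g _ =>
      (if a = e then 1 else 0) * (if b = g then 1 else 0)).trans ?_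
    simp only [mul_ite, mul_one, mul_zero, Finset.sum_ite_irrel, Finset.sum_const_zero,
      Finset.sum_ite_eq, Finset.mem_univ, if_true]
    simp only [hP₃, hP₂, mul_assoc, Finset.sum_mul]
    simp only [Finset.mul_sum]
  have coincide_03_14 : ∑ γ : Fin 8 → V, (∏ k, A (γ k) (γ (k + 1))) *
        ((if γ 0 = γ 3 then 1 else 0) * (if γ 1 = γ 4 then 1 else 0)) =
      ∑ a, ∑ b, A a b * P₂ b a * P₄ b a := by
    refine (sum_closedWalk_eight A fun a b _ d e _ _ _ =>
      (if a = d then 1 else 0) * (if b = e then 1 else 0)).trans ?_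
    simp only [mul_ite, mul_one, mul_zero, Finset.sum_ite_irrel, Finset.sum_const_zero,
      Finset.sum_ite_eq, Finset.mem_univ, if_true]
    simp only [hP₄, hP₃, hP₂, mul_assoc, Finset.sum_mul]
    simp only [Finset.mul_sum]
    repeat refine Finset.sum_congr rfl fun _ _ => ?_
    ring_nf
    simp only [idem]
  have coincide_04_15 : ∑ γ : Fin 8 → V, (∏ k, A (γ k) (γ (k + 1))) *
        ((if γ 0 = γ 4 then 1 else 0) * (if γ 1 = γ 5 then 1 else 0)) =
      ∑ a, ∑ b, A a b * P₃ b a * P₃ b a := by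
    refine (sum_closedWalk_eight A fun a b _ _ e f _ _ =>
      (if a = e then 1 else 0) * (if b = f then 1 else 0)).trans ?_
    simp only [mul_ite, mul_one, mul_zero, Finset.sum_ite_irrel, Finset.sum_const_zero,
      Finset.sum_ite_eq, Finset.mem_univ, if_true]
    simp only [hP₃, hP₂, mul_assoc, Finset.sum_mul]
    simp only [Finset.mul_sum]
    repeat refine Finset.sum_congr rfl fun _ _ => ?_
    ring_nf
    simp only [idem]
  have coincide_05_36_47 : ∑ γ : Fin 8 → V, (∏ k, A (γ k) (γ (k + 1))) *
        ((if γ 0 = γ 5 then 1 else 0) * (if γ 3 = γ 6 then 1 else 0) *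
          (if γ 4 = γ 7 then 1 else 0)) =
      ∑ a, ∑ d, A a d * P₃ a d * P₂ d a := by
    refine (sum_closedWalk_eight A fun a _ _ d e f g h =>
      (if a = f then 1 else 0) * (if d = g then 1 else 0) * (if e = h then 1 else 0)).trans ?_
    simp only [mul_ite, mul_one, mul_zero, Finset.sum_ite_eq, Finset.mem_univ,
      if_true]
    refine Finset.sum_congr rfl fun a _ => (comm₃ _).trans (Finset.sum_congr rfl fun e _ => ?_)
    simp only [hP₃, hP₂, mul_assoc, Finset.sum_mul]
    simp only [Finset.mul_sum]
    repeat refine Finset.sum_congr rfl fun _ _ => ?_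
    ring_nf
    simp only [idem]
  have coincide_05_26_47 : ∑ γ : Fin 8 → V, (∏ k, A (γ k) (γ (k + 1))) *
        ((if γ 0 = γ 5 then 1 else 0) * (if γ 2 = γ 6 then 1 else 0) *
          (if γ 4 = γ 7 then 1 else 0)) =
      ∑ c, ∑ e, A c e * P₂ c e * R e c := by
    refine (sum_closedWalk_eight A fun a _ c _ e f g h =>
      (if a = f then 1 else 0) * (if c = g then 1 else 0) * (if e = h then 1 else 0)).trans ?_
    simp only [mul_ite, mul_one, mul_zero, Finset.sum_ite_eq, Finset.mem_univ,
      if_true]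
    have swap : ∀ F : V → V → V → V → V → ℚ, ∑ a, ∑ b, ∑ c, ∑ d, ∑ e, F a b c d e =
        ∑ c, ∑ e, ∑ a, ∑ b, ∑ d, F a b c d e := fun F =>
      (Finset.sum_congr rfl fun a _ => Finset.sum_comm).trans <| Finset.sum_comm.trans <|
        Finset.sum_congr rfl fun c _ => (Finset.sum_congr rfl fun a _ => comm₃ _).trans
          Finset.sum_comm
    refine (swap _).trans (Finset.sum_congr rfl fun c _ => Finset.sum_congr rfl fun e _ => ?_)
    rw [mul_comm]
    simp only [hR', hP₂, mul_assoc, Finset.sum_mul]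
    simp only [Finset.mul_sum]
    repeat refine Finset.sum_congr rfl fun _ _ => ?_
    ring_nf
    simp only [idem]
  have coincide_05_26_37 : ∑ γ : Fin 8 → V, (∏ k, A (γ k) (γ (k + 1))) *
        ((if γ 0 = γ 5 then 1 else 0) * (if γ 2 = γ 6 then 1 else 0) *
          (if γ 3 = γ 7 then 1 else 0)) =
      ∑ a, ∑ c, A a c * P₂ a c * R c a := by
    refine (sum_closedWalk_eight A fun a _ c d _ f g h =>
      (if a = f then 1 else 0) * (if c = g then 1 else 0) *
        (if d = h then 1 else 0)).trans ?_
    simp only [mul_ite, mul_one, mul_zero, Finset.sum_ite_eq, Finset.mem_univ,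
      if_true]
    refine Finset.sum_congr rfl fun a _ =>
      Finset.sum_comm.trans (Finset.sum_congr rfl fun c _ => ?_)
    simp only [hP₂, hR', mul_assoc, Finset.sum_mul]
    simp only [Finset.mul_sum]
    repeat refine Finset.sum_congr rfl fun _ _ => ?_
    ring_nf
    simp only [idem]
  have coincide_04_26_37 : ∑ γ : Fin 8 → V, (∏ k, A (γ k) (γ (k + 1))) *
        ((if γ 0 = γ 4 then 1 else 0) * (if γ 2 = γ 6 then 1 else 0) *
          (if γ 3 = γ 7 then 1 else 0)) =
      ∑ a, ∑ c, P₂ a c * P₂ c a * P₂ a c := by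
    refine (sum_closedWalk_eight A fun a _ c d e _ g h =>
      (if a = e then 1 else 0) * (if c = g then 1 else 0) *
        (if d = h then 1 else 0)).trans ?_
    simp only [mul_ite, mul_one, mul_zero, Finset.sum_ite_irrel, Finset.sum_const_zero,
      Finset.sum_ite_eq, Finset.mem_univ, if_true]
    refine Finset.sum_congr rfl fun a _ =>
      Finset.sum_comm.trans (Finset.sum_congr rfl fun c _ => ?_)
    simp only [hP₂, mul_assoc, Finset.sum_mul]
    simp only [Finset.mul_sum]
    repeat refine Finset.sum_congr rfl fun _ _ => ?_
    ring_nf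
    simp only [idem]
  have coincide_04_15_26_37 : ∑ γ : Fin 8 → V, (∏ k, A (γ k) (γ (k + 1))) *
        ((if γ 0 = γ 4 then 1 else 0) * (if γ 1 = γ 5 then 1 else 0) * (if γ 2 = γ 6 then 1 else 0) *
          (if γ 3 = γ 7 then 1 else 0)) =
      ∑ a, ∑ c, P₂ a c * P₂ c a := by
    refine (sum_closedWalk_eight A fun a b c d e f g h =>
      (if a = e then 1 else 0) * (if b = f then 1 else 0) * (if c = g then 1 else 0) *
        (if d = h then 1 else 0)).trans ?_
    simp only [mul_ite, mul_one, mul_zero, Finset.sum_ite_eq, Finset.mem_univ,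
      if_true]
    refine Finset.sum_congr rfl fun a _ =>
      Finset.sum_comm.trans (Finset.sum_congr rfl fun c _ => ?_)
    simp only [hP₂, mul_assoc, Finset.sum_mul]
    simp only [Finset.mul_sum]
    repeat refine Finset.sum_congr rfl fun _ _ => ?_
    ring_nf
    simp only [idem]
  rw [sum_closedWalk_injective A r hA irrefl asymm]
  have c : ∀ n x y : ℚ, x * (n * y) = n * (x * y) := fun n x y => by ring
  simp only [coincidenceWeight, mul_add, mul_sub, c 8, c 4, c 2, Finset.sum_add_distrib,
    Finset.sum_sub_distrib, ← Finset.mul_sum]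
  rw [no_coincidence, coincide_03, coincide_04, coincide_04_26, coincide_03_15, coincide_03_16,
    coincide_04_16, coincide_03_14, coincide_04_15, coincide_05_36_47, coincide_05_26_47,
    coincide_05_26_37, coincide_04_26_37, coincide_04_15_26_37]
  ring

end Inclusion

section LocallyTransitive

theorem sum_range_of_sub_eq {p P : ℚ → ℚ} (hP : ∀ x, P x - P (x - 1) = p x) (a : ℚ) (m : ℕ) :
    ∑ k ∈ Finset.range m, p (a + k + 1) = P (a + m) - P a := by
  induction m with
  | zero => simp
  | succ m ih =>
    rw [Finset.sum_range_succ, ih, ← hP]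
    push_cast
    rw [show a + (m + 1 : ℚ) = a + m + 1 by ring, show a + (m : ℚ) + 1 - 1 = a + m by ring]
    ring

theorem sum_range_sub_of_sub_eq {p P : ℚ → ℚ} (hP : ∀ x, P x - P (x - 1) = p x) (a : ℚ) (m : ℕ) :
    ∑ k ∈ Finset.range m, p (a - k) = P a - P (a - m) := by
  induction m with
  | zero => simp
  | succ m ih =>
    rw [Finset.sum_range_succ, ih, ← hP]
    push_cast
    rw [show a - (m + 1 : ℚ) = a - m - 1 by ring]
    ring

variable {h : ℕ}

theorem ZMod.sum_eq_zero_add_sum_range {M : Type*} [AddCommMonoid M]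
    (f : ZMod (2 * h + 1) → M) :
    ∑ x, f x = f 0 + ∑ k ∈ Finset.range h, (f ((k + 1 : ℕ)) + f (-((k + 1 : ℕ)))) := by
  have h₁ : ∑ x, f x = ∑ k ∈ Finset.range (2 * h + 1), f k := by
    rw [Finset.sum_range fun k => f (k : ZMod (2 * h + 1))]
    exact Fintype.sum_congr _ _ fun x => congrArg f (ZMod.natCast_zmod_val x).symm
  have h₂ : ∀ g : ℕ → M, ∑ k ∈ Finset.range (2 * h), g k =
      ∑ k ∈ Finset.range h, g k + ∑ k ∈ Finset.range h, g (h + k) := fun g => by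
    rw [two_mul, Finset.sum_range_add]
  rw [h₁, Finset.sum_range_succ', h₂, add_comm, Nat.cast_zero,
    Finset.sum_add_distrib]
  congr 2
  rw [← Finset.sum_range_reflect]
  refine Finset.sum_congr rfl fun k hk => congrArg f ?_
  have hk := Finset.mem_range.1 hk
  rw [eq_neg_iff_add_eq_zero, ← Nat.cast_add,
    show h + (h - 1 - k) + 1 + (k + 1) = 2 * h + 1 by omega, ZMod.natCast_self]

/-- The adjacency matrix of the regular locally transitive tournament. -/
noncomputable def rltMatrix (h : ℕ) : Matrix (ZMod (2 * h + 1)) (ZMod (2 * h + 1)) ℚ :=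
  open Classical in fun i j => if rltAdj (2 * h + 1) i j then 1 else 0

theorem rltAdj_iff {i j : ZMod (2 * h + 1)} :
    rltAdj (2 * h + 1) i j ↔ 1 ≤ (j - i).val ∧ (j - i).val ≤ h := by
  simp [rltAdj]

theorem ZMod.val_natCast_succ {d : ℕ} (hd : d < h) :
    ((d + 1 : ℕ) : ZMod (2 * h + 1)).val = d + 1 :=
  ZMod.val_cast_of_lt (by omega)

theorem ZMod.val_neg_natCast_succ {d : ℕ} (hd : d < h) :
    (-((d + 1 : ℕ) : ZMod (2 * h + 1))).val = 2 * h - d := by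
  have : -((d + 1 : ℕ) : ZMod (2 * h + 1)) = ((2 * h - d : ℕ) : ZMod (2 * h + 1)) := by
    rw [neg_eq_iff_add_eq_zero, ← Nat.cast_add, show d + 1 + (2 * h - d) = 2 * h + 1 by omega,
      ZMod.natCast_self]
  rw [this, ZMod.val_cast_of_lt (by omega)]

/-- `M` is the circulant matrix whose entry at `(i, j)` is `r` if `i = j`, is `p d` if `j = i + d`
with `1 ≤ d ≤ h`, and is `q d` if `j = i - d` with `1 ≤ d ≤ h`. -/
def IsPiecewiseCirculant (M : Matrix (ZMod (2 * h + 1)) (ZMod (2 * h + 1)) ℚ) (r : ℚ)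
    (p q : ℚ → ℚ) : Prop :=
  (∀ a, M a a = r) ∧ (∀ a, ∀ d < h, M a (a + (d + 1 : ℕ)) = p (d + 1)) ∧
    ∀ a, ∀ d < h, M (a + (d + 1 : ℕ)) a = q (d + 1)

theorem isPiecewiseCirculant_rltMatrix :
    IsPiecewiseCirculant (rltMatrix h) 0 (fun _ => 1) (fun _ => 0) := by
  refine ⟨fun a => ?_, fun a d hd => ?_, fun a d hd => ?_⟩
  · simp [rltMatrix, rltAdj_iff]
  · rw [rltMatrix, if_pos]
    rw [rltAdj_iff, add_sub_cancel_left, ZMod.val_natCast_succ hd]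
    omega
  · rw [rltMatrix, if_neg]
    rw [rltAdj_iff, sub_add_cancel_left, ZMod.val_neg_natCast_succ hd]
    omega

theorem rltMatrix_mul_apply (M : Matrix (ZMod (2 * h + 1)) (ZMod (2 * h + 1)) ℚ)
    (a b : ZMod (2 * h + 1)) :
    (rltMatrix h * M) a b = ∑ k ∈ Finset.range h, M (a + (k + 1 : ℕ)) b := by
  obtain ⟨h₀, h₁, h₂⟩ := isPiecewiseCirculant_rltMatrix (h := h)
  rw [Matrix.mul_apply, ← Equiv.sum_comp (Equiv.addLeft a), ZMod.sum_eq_zero_add_sum_range]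
  simp only [Equiv.coe_addLeft, add_zero, h₀, zero_mul, zero_add]
  refine Finset.sum_congr rfl fun k hk => ?_
  have hk := Finset.mem_range.1 hk
  have := h₂ (a + -((k + 1 : ℕ))) k hk
  rw [neg_add_cancel_right] at this
  rw [h₁ a k hk, this]
  ring

theorem IsPiecewiseCirculant.mul_left {M : Matrix (ZMod (2 * h + 1)) (ZMod (2 * h + 1)) ℚ}
    {r : ℚ} {p q : ℚ → ℚ} (hM : IsPiecewiseCirculant M r p q)
    {M' : Matrix (ZMod (2 * h + 1)) (ZMod (2 * h + 1)) ℚ} (hM' : M' = rltMatrix h * M)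
    (P Q : ℚ → ℚ) {r' : ℚ} {p' q' : ℚ → ℚ} (hP : ∀ x, P x - P (x - 1) = p x)
    (hQ : ∀ x, Q x - Q (x - 1) = q x)
    (hr : Q h - Q 0 = r') (hp : ∀ x, P (x - 1) - P 0 + r + (Q (h - x) - Q 0) = p' x)
    (hq : ∀ x, Q h - Q x + (P h - P (h - x)) = q' x) :
    IsPiecewiseCirculant M' r' p' q' := by
  subst hM'
  obtain ⟨h₀, h₁, h₂⟩ := hM
  refine ⟨fun a => ?_, fun a d hd => ?_, fun a d hd => ?_⟩
  · rw [rltMatrix_mul_apply, ← hr, ← zero_add (h : ℚ), ← sum_range_of_sub_eq hQ]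
    refine Finset.sum_congr rfl fun k hk => ?_
    rw [h₂ a k (Finset.mem_range.1 hk), zero_add]
  · obtain ⟨m, rfl⟩ : ∃ m, h = d + 1 + m := ⟨h - (d + 1), by omega⟩
    rw [rltMatrix_mul_apply, ← hp, Finset.sum_range_add, Finset.sum_range_succ]
    congr 1
    · congr 1
      · have := sum_range_sub_of_sub_eq hP d d
        rw [sub_self] at this
        rw [show ((d : ℚ) + 1 - 1) = d by ring, ← this]
        refine Finset.sum_congr rfl fun k hk => ?_
        obtain ⟨e, rfl⟩ : ∃ e, d = k + 1 + e :=
          ⟨d - (k + 1), by have := Finset.mem_range.1 hk; omega⟩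
        have := h₁ (a + (k + 1 : ℕ)) e (by omega)
        rw [show a + ((k + 1 + e + 1 : ℕ) : ZMod (2 * (k + 1 + e + 1 + m) + 1)) =
          a + (k + 1 : ℕ) + (e + 1 : ℕ) by push_cast; ring, this]
        congr 1
        push_cast
        ring
      · exact h₀ _
    · have := sum_range_of_sub_eq hQ 0 m
      rw [zero_add] at this
      rw [show (((d + 1 + m : ℕ) : ℚ) - (d + 1)) = m by push_cast; ring, ← this]
      refine Finset.sum_congr rfl fun k hk => ?_
      have hk := Finset.mem_range.1 hk
      rw [show a + ((d + 1 + k + 1 : ℕ) : ZMod (2 * (d + 1 + m) + 1)) =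
        a + (d + 1 : ℕ) + (k + 1 : ℕ) by push_cast; ring, h₂ _ k (by omega), zero_add]
  · obtain ⟨m, rfl⟩ : ∃ m, h = m + (d + 1) := ⟨h - (d + 1), by omega⟩
    rw [rltMatrix_mul_apply, ← hq, Finset.sum_range_add]
    congr 1
    · have := sum_range_of_sub_eq hQ (d + 1) m
      rw [show ((m + (d + 1) : ℕ) : ℚ) = d + 1 + m by push_cast; ring, ← this]
      refine Finset.sum_congr rfl fun k hk => ?_
      have hk := Finset.mem_range.1 hk
      rw [add_assoc, ← Nat.cast_add, show d + 1 + (k + 1) = d + 1 + k + 1 by ring,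
        h₂ _ _ (by omega)]
      push_cast
      rfl
    · have := sum_range_sub_of_sub_eq hP (m + (d + 1) : ℕ) (d + 1)
      push_cast at this ⊢
      rw [← this]
      refine Finset.sum_congr rfl fun k hk => ?_
      obtain ⟨e, rfl⟩ : ∃ e, d = k + e := ⟨d - k, by have := Finset.mem_range.1 hk; omega⟩
      have := h₁ (a + (k + e + 1 : ℕ) + (m + k + 1 : ℕ)) (m + e) (by omega)
      have hz : (k + e + 1 : ℕ) + (m + k + 1 : ℕ) + (m + e + 1 : ℕ) =
          (0 : ZMod (2 * (m + (k + e + 1)) + 1)) := by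
        rw [← Nat.cast_add, ← Nat.cast_add, show k + e + 1 + (m + k + 1) + (m + e + 1) =
          2 * (m + (k + e + 1)) + 1 by ring, ZMod.natCast_self]
      rw [add_assoc a, add_assoc a, hz, add_zero] at this
      push_cast at this ⊢
      rw [add_assoc a, this]
      congr 1
      ring

theorem IsPiecewiseCirculant.sum_sum {M : Matrix (ZMod (2 * h + 1)) (ZMod (2 * h + 1)) ℚ}
    {r : ℚ} {p q : ℚ → ℚ} (hM : IsPiecewiseCirculant M r p q) (S : ℚ → ℚ)
    (hS : ∀ x, S x - S (x - 1) = p x + q x) :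
    ∑ a, ∑ b, M a b = (2 * h + 1) * (r + (S h - S 0)) := by
  obtain ⟨h₀, h₁, h₂⟩ := hM
  have : ∀ a, ∑ b, M a b = r + (S h - S 0) := by
    intro a
    have hs := sum_range_of_sub_eq (p := fun x => p x + q x) hS 0 h
    rw [zero_add] at hs
    rw [← Equiv.sum_comp (Equiv.addLeft a), ZMod.sum_eq_zero_add_sum_range, ← hs]
    simp only [Equiv.coe_addLeft, add_zero, h₀]
    congr 1
    refine Finset.sum_congr rfl fun k hk => ?_
    have hk := Finset.mem_range.1 hk
    have := h₂ (a + -((k + 1 : ℕ))) k hk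
    rw [neg_add_cancel_right] at this
    rw [h₁ a k hk, this, zero_add]
  simp only [this, Finset.sum_const, Finset.card_univ, ZMod.card, nsmul_eq_mul]
  push_cast
  ring

theorem card_closedWalk_rlt (h : ℕ) :
    (Nat.card {γ : Fin 8 → ZMod (2 * h + 1) // Function.Injective γ ∧
        ∀ k, rltAdj (2 * h + 1) (γ k) (γ (k + 1))} : ℚ) =
      (2 * h + 2) * (2 * h + 1) * (2 * h) * (2 * h - 2) * (2 * h - 4) * (2 * h - 6) *
        (83 * (2 * h + 1) ^ 2 - 575 * (2 * h + 1) + 510) / 20160 := by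
  classical
  obtain ⟨A, hA⟩ : ∃ A, A = rltMatrix h := ⟨_, rfl⟩
  obtain ⟨P₂, hP₂⟩ : ∃ P, P = A * A := ⟨_, rfl⟩
  obtain ⟨P₃, hP₃⟩ : ∃ P, P = A * P₂ := ⟨_, rfl⟩
  obtain ⟨P₄, hP₄⟩ : ∃ P, P = A * P₃ := ⟨_, rfl⟩
  obtain ⟨R, hR'⟩ : ∃ R, R = A * Matrix.hadamard A P₂ := ⟨_, rfl⟩
  have h₁ : IsPiecewiseCirculant A 0 (fun _ => 1) (fun _ => 0) :=
    hA ▸ isPiecewiseCirculant_rltMatrix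
  have h₂ := h₁.mul_left (M' := P₂) (by rw [← hA, hP₂])
    (fun x => x)
    (fun _ => 0)
    (r' := 0)
    (p' := fun x => x - 1)
    (q' := fun x => x)
    (fun x => by ring) (fun x => by ring) (by ring) (fun x => by ring) (fun x => by ring)
  have h₃ := h₂.mul_left (M' := P₃) (by rw [← hA, hP₃])
    (fun x => (x ^ 2 - x) / 2)
    (fun x => (x ^ 2 + x) / 2)
    (r' := (h ^ 2 + h) / 2)
    (p' := fun x => (2 * x ^ 2 - 2 * x * h - 4 * x + h ^ 2 + h + 2) / 2)
    (q' := fun x => (-2 * x ^ 2 + 2 * x * h - 2 * x + h ^ 2 + h) / 2)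
    (fun x => by ring) (fun x => by ring) (by ring) (fun x => by ring) (fun x => by ring)
  have h₄ := h₃.mul_left (M' := P₄) (by rw [← hA, hP₄])
    (fun x => (2 * x ^ 3 - 3 * x ^ 2 * h - 3 * x ^ 2 + 3 * x * h ^ 2 + x) / 6)
    (fun x => (-2 * x ^ 3 + 3 * x ^ 2 * h - 6 * x ^ 2 + 3 * x * h ^ 2 + 6 * x * h - 4 * x) / 6)
    (r' := (2 * h ^ 3 - 2 * h) / 3)
    (p' := fun x => (4 * x ^ 3 - 6 * x ^ 2 * h - 15 * x ^ 2 + 12 * x * h + 17 * x + 4 * h ^ 3 - 4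
    * h - 6) / 6)
    (q' := fun x => (4 * x ^ 3 - 6 * x ^ 2 * h + 9 * x ^ 2 - 12 * x * h + 5 * x + 4 * h ^ 3 - 4 *
    h) / 6)
    (fun x => by ring) (fun x => by ring) (by ring) (fun x => by ring) (fun x => by ring)
  have hβ : IsPiecewiseCirculant (Matrix.hadamard A P₂) 0 (fun x => x - 1) (fun _ => 0) :=
    ⟨fun a => by rw [Matrix.hadamard_apply, h₁.1, zero_mul],
      fun a d hd => by rw [Matrix.hadamard_apply, h₁.2.1 a d hd, h₂.2.1 a d hd, one_mul],
      fun a d hd => by rw [Matrix.hadamard_apply, h₁.2.2 a d hd, zero_mul]⟩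
  have hR := hβ.mul_left (M' := R) (by rw [← hA, hR'])
    (fun x => (x ^ 2 - x) / 2)
    (fun _ => 0)
    (r' := 0)
    (p' := fun x => (x ^ 2 - 3 * x + 2) / 2)
    (q' := fun x => (-x ^ 2 + 2 * x * h - x) / 2)
    (fun x => by ring) (fun x => by ring) (by ring) (fun x => by ring) (fun x => by ring)
  rw [card_closedWalk_eight A (rltAdj (2 * h + 1)) (fun i j => by rw [hA, rltMatrix])
    (fun i => by simp [rltAdj_iff]) (fun i j => ?_) P₂ P₃ P₄ R hP₂ hP₃ hP₄ hR']
  · rw [IsPiecewiseCirculant.sum_sum (M := fun a b => walkPairWeight (A a b) (P₂ a b) (P₂ b a)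
      (P₃ a b) (P₃ b a) (P₄ a b) (P₄ b a) (P₃ a a) (R b a))
      (r := walkPairWeight 0 0 0 ((h ^ 2 + h) / 2) ((h ^ 2 + h) / 2)
        ((2 * h ^ 3 - 2 * h) / 3) ((2 * h ^ 3 - 2 * h) / 3)
        ((h ^ 2 + h) / 2) 0)
      (p := fun x => walkPairWeight 1 (x - 1) x ((2 * x ^ 2 - 2 * x * h - 4 * x + h ^ 2 + h + 2) / 2)
        ((-2 * x ^ 2 + 2 * x * h - 2 * x + h ^ 2 + h) / 2) ((4 * x ^ 3 - 6 * x ^ 2 * h - 15 * x ^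
        2 + 12 * x * h + 17 * x + 4 * h ^ 3 - 4 * h - 6) / 6) ((4 * x ^ 3 - 6 * x ^ 2 * h + 9 * x
        ^ 2 - 12 * x * h + 5 * x + 4 * h ^ 3 - 4 * h) / 6) ((h ^ 2 + h) / 2) ((-x ^ 2 + 2 * x * h
        - x) / 2))
      (q := fun x => walkPairWeight 0 x (x - 1) ((-2 * x ^ 2 + 2 * x * h - 2 * x + h ^ 2 + h) / 2) ((2
        * x ^ 2 - 2 * x * h - 4 * x + h ^ 2 + h + 2) / 2) ((4 * x ^ 3 - 6 * x ^ 2 * h + 9 * x ^ 2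
        - 12 * x * h + 5 * x + 4 * h ^ 3 - 4 * h) / 6) ((4 * x ^ 3 - 6 * x ^ 2 * h - 15 * x ^ 2 +
        12 * x * h + 17 * x + 4 * h ^ 3 - 4 * h - 6) / 6) ((h ^ 2 + h) / 2) 0)
      ⟨fun a => ?_, fun a d hd => ?_, fun a d hd => ?_⟩
      (fun x =>
        (80 * x ^ 7 - 280 * x ^ 6 * h + 140 * x ^ 6 + 252 * x ^ 5 * h ^ 2 - 588 * x ^ 5 * h + 203
        * x ^ 5 + 280 * x ^ 4 * h ^ 3 + 630 * x ^ 4 * h ^ 2 - 245 * x ^ 4 * h - 910 * x ^ 4 - 560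
        * x ^ 3 * h ^ 4 + 280 * x ^ 3 * h ^ 3 + 3500 * x ^ 3 * h ^ 2 - 7630 * x ^ 3 * h + 12425 *
        x ^ 3 - 2100 * x ^ 2 * h ^ 4 + 3080 * x ^ 2 * h ^ 3 - 1680 * x ^ 2 * h ^ 2 - 16065 * x ^
        2 * h + 13370 * x ^ 2 + 560 * x * h ^ 6 - 770 * x * h ^ 4 + 6020 * x * h ^ 3 - 2352 * x *
        h ^ 2 - 7532 * x * h - 108 * x) / 630) (fun x => by simp only [walkPairWeight]; ring)]
    · simp only [h₄.1, Finset.sum_const, Finset.card_univ, ZMod.card, nsmul_eq_mul, walkPairWeight]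
      push_cast
      ring
    · simp only [h₁.1, h₂.1, h₃.1, h₄.1, walkPairWeight]
      ring
    · simp only [h₃.1, h₁.2.1 a d hd, h₂.2.1 a d hd, h₂.2.2 a d hd, h₃.2.1 a d hd, h₃.2.2 a d hd,
        h₄.2.1 a d hd, h₄.2.2 a d hd, hR.2.2 a d hd]
    · simp only [h₃.1, h₁.2.2 a d hd, h₂.2.1 a d hd, h₂.2.2 a d hd, h₃.2.1 a d hd, h₃.2.2 a d hd,
        h₄.2.1 a d hd, h₄.2.2 a d hd]
      simp only [walkPairWeight]
      ring
  · intro hij hji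
    rw [rltAdj_iff] at hij hji
    have : NeZero (j - i) := ⟨fun h0 => by rw [h0, ZMod.val_zero] at hij; omega⟩
    rw [← neg_sub j i, ZMod.val_neg_of_ne_zero] at hji
    omega

end LocallyTransitive

section DoublyRegular

namespace Tournament

variable {V : Type*} (T : Tournament V)

/-- The adjacency matrix of a tournament. -/
def adjMatrix : Matrix V V ℚ :=
  fun i j => if T.r i j then 1 else 0

theorem adjMatrix_self (i : V) : T.adjMatrix i i = 0 :=
  if_neg (T.irrefl i)

theorem adjMatrix_add_swap [DecidableEq V] (i j : V) :
    T.adjMatrix i j + T.adjMatrix j i = 1 - if i = j then 1 else 0 := by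
  rcases eq_or_ne i j with rfl | hij
  · simp [adjMatrix_self]
  · by_cases hr : T.r j i <;> simp [adjMatrix, T.total i j hij, hr, hij]

variable {T} {t : ℕ} [Fintype V]

theorem IsDoublyRegular.sum_mul (hT : T.IsDoublyRegular t) {i j : V} (hij : i ≠ j) :
    ∑ k, T.adjMatrix i k * T.adjMatrix j k = t := by
  rw [← hT i j hij, Nat.card_eq_fintype_card, Fintype.card_subtype]
  simp [adjMatrix, ← ite_and, and_comm]

variable [DecidableEq V]

theorem IsDoublyRegular.sum_adjMatrix (hT : T.IsDoublyRegular t) (ht : t ≠ 0)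
    [Nontrivial V] (i : V) : ∑ k, T.adjMatrix i k = 2 * t + 1 := by
  set d := ∑ k, T.adjMatrix i k with hd
  have h₁ : ∑ j, ∑ k, T.adjMatrix i j * T.adjMatrix i k * T.adjMatrix j k = d * t := by
    rw [hd, Finset.sum_mul]
    refine Finset.sum_congr rfl fun j _ => ?_
    rcases eq_or_ne i j with rfl | hij
    · simp [adjMatrix_self]
    · simp only [mul_assoc, ← Finset.mul_sum, hT.sum_mul hij]
  have h₂ : ∑ j, ∑ k, T.adjMatrix i j * T.adjMatrix i k * T.adjMatrix k j = d * t := by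
    rw [← h₁, Finset.sum_comm]
    exact Finset.sum_congr rfl fun j _ => Finset.sum_congr rfl fun k _ => by ring
  have h₃ : d * t + d * t = d * d - d := by
    have idem : ∀ j, T.adjMatrix i j * T.adjMatrix i j = T.adjMatrix i j := fun j => by
      simp [adjMatrix]
    nth_rewrite 1 [← h₁]
    rw [← h₂]
    simp only [← Finset.sum_add_distrib, ← mul_add, adjMatrix_add_swap]
    simp only [mul_sub, Finset.sum_sub_distrib, mul_one, mul_ite, mul_zero, Finset.sum_ite_eq,
      Finset.mem_univ, if_true, idem, ← Finset.sum_mul_sum]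
    rw [hd]
  have hd₀ : d ≠ 0 := by
    intro h0
    obtain ⟨j, hj⟩ := exists_ne i
    have hz := (Finset.sum_eq_zero_iff_of_nonneg fun k _ => by
      rw [adjMatrix]; split_ifs <;> norm_num).1 h0
    have := hT.sum_mul hj.symm
    rw [Finset.sum_eq_zero fun k hk => by rw [hz k hk, zero_mul]] at this
    exact ht (by exact_mod_cast this.symm)
  have : d * (d - (2 * t + 1)) = 0 := by linear_combination -h₃
  linarith [(mul_eq_zero.1 this).resolve_left hd₀]

theorem IsDoublyRegular.sum_adjMatrix_swap (hT : T.IsDoublyRegular t) (ht : t ≠ 0)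
    [Nontrivial V] (hV : Fintype.card V = 4 * t + 3) (i : V) :
    ∑ k, T.adjMatrix k i = 2 * t + 1 := by
  have h : ∑ k, (T.adjMatrix i k + T.adjMatrix k i) = 4 * t + 2 := by
    simp only [adjMatrix_add_swap, Finset.sum_sub_distrib, Finset.sum_const, Finset.card_univ, hV,
      nsmul_eq_mul, Finset.sum_ite_eq, Finset.mem_univ, if_true]
    push_cast
    ring
  rw [Finset.sum_add_distrib, hT.sum_adjMatrix ht] at h
  linarith

theorem IsDoublyRegular.sum_mul_eq (hT : T.IsDoublyRegular t) (ht : t ≠ 0)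
    [Nontrivial V] (i j : V) : ∑ k, T.adjMatrix i k * T.adjMatrix j k =
      t + (t + 1) * if i = j then 1 else 0 := by
  rcases eq_or_ne i j with rfl | hij
  · have idem : ∀ k, T.adjMatrix i k * T.adjMatrix i k = T.adjMatrix i k := fun k => by
      simp [adjMatrix]
    simp only [idem, hT.sum_adjMatrix ht, if_true]
    ring
  · simp [hT.sum_mul hij, hij]

theorem IsDoublyRegular.adjMatrix_mul_adjMatrix_apply (hT : T.IsDoublyRegular t) (ht : t ≠ 0)
    [Nontrivial V] (i j : V) : (T.adjMatrix * T.adjMatrix) i j =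
      t * T.adjMatrix i j + (t + 1) * T.adjMatrix j i := by
  have h : ∀ k, T.adjMatrix i k * T.adjMatrix k j = T.adjMatrix i k -
      (if k = j then T.adjMatrix i k else 0) - T.adjMatrix i k * T.adjMatrix j k := fun k => by
    have := T.adjMatrix_add_swap k j
    split_ifs at this ⊢ <;> linear_combination T.adjMatrix i k * this
  have := T.adjMatrix_add_swap i j
  simp only [Matrix.mul_apply, h, Finset.sum_sub_distrib, hT.sum_adjMatrix ht, hT.sum_mul_eq ht,
    Finset.sum_ite_eq', Finset.mem_univ, if_true]
  linear_combination -(t + 1 : ℚ) * this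

theorem IsDoublyRegular.card_closedWalk (hT : T.IsDoublyRegular t) (ht : t ≠ 0)
    (hV : Fintype.card V = 4 * t + 3) :
    (Nat.card {γ : Fin 8 → V // Function.Injective γ ∧ ∀ k, T.r (γ k) (γ (k + 1))} : ℚ) =
      (4 * t + 4) * (4 * t + 3) * (4 * t + 2) * (4 * t) ^ 2 * (4 * t - 4) *
        ((4 * t + 3) ^ 2 - 7 * (4 * t + 3) + 1) / 256 := by
  have : Nontrivial V := Fintype.one_lt_card_iff_nontrivial.1 (by omega)
  obtain ⟨A, hA⟩ : ∃ A, A = T.adjMatrix := ⟨_, rfl⟩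
  obtain ⟨P₂, hP₂⟩ : ∃ P, P = A * A := ⟨_, rfl⟩
  obtain ⟨P₃, hP₃⟩ : ∃ P, P = A * P₂ := ⟨_, rfl⟩
  obtain ⟨P₄, hP₄⟩ : ∃ P, P = A * P₃ := ⟨_, rfl⟩
  obtain ⟨R, hR⟩ : ∃ R, R = A * Matrix.hadamard A P₂ := ⟨_, rfl⟩
  have h₂ : ∀ i j, P₂ i j = t * A i j + (t + 1) * A j i := fun i j => by
    rw [hP₂, hA, hT.adjMatrix_mul_adjMatrix_apply ht]
  have h₃ : ∀ i j, P₃ i j = t * P₂ i j + (t + 1) * (t + (t + 1) * if i = j then 1 else 0) :=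
    fun i j => by
      rw [hP₃, Matrix.mul_apply]
      simp only [h₂ _ j, mul_add, mul_left_comm (A i _), Finset.sum_add_distrib, ← Finset.mul_sum]
      rw [← Matrix.mul_apply, ← hP₂, hA, hT.sum_mul_eq ht, h₂, hA]
      ring
  have h₄ : ∀ i j, P₄ i j = t * P₃ i j + (t + 1) * (t * (2 * t + 1) + (t + 1) * A i j) :=
    fun i j => by
      rw [hP₄, Matrix.mul_apply]
      simp only [h₃ _ j, mul_add, mul_left_comm (A i _), Finset.sum_add_distrib, ← Finset.mul_sum,
        mul_ite, mul_one, mul_zero, Finset.sum_ite_eq', Finset.mem_univ, if_true, ← Finset.sum_mul]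
      rw [← Matrix.mul_apply, ← hP₃, h₃, hA, hT.sum_adjMatrix ht]
      simp only [mul_add, mul_ite, mul_one, mul_zero]
      ring
  have hadamard_eq : Matrix.hadamard A P₂ = (t : ℚ) • A := by
    ext i j
    have hij := T.total i j
    rw [Matrix.hadamard_apply, h₂, Matrix.smul_apply, smul_eq_mul, hA]
    rcases eq_or_ne i j with rfl | hne
    · simp [adjMatrix_self]
    · have := hij hne
      by_cases hr : T.r j i <;> simp [adjMatrix, this, hr]
  have hR' : ∀ i j, R i j = t * P₂ i j := fun i j => by
    rw [hR, hadamard_eq, Matrix.mul_smul, ← hP₂, Matrix.smul_apply, smul_eq_mul]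
  have key : ∀ a b, walkPairWeight (A a b) (P₂ a b) (P₂ b a) (P₃ a b) (P₃ b a) (P₄ a b) (P₄ b a)
      (P₃ a a) (R b a) = (if a = b then (2 * t * (t + 1) * (2 * t + 1) : ℚ) ^ 2 else 0) +
        A a b * walkPairWeight 1 t (t + 1) (2 * t ^ 2 + t) (2 * t ^ 2 + 2 * t)
          (4 * t ^ 3 + 5 * t ^ 2 + 3 * t + 1) (4 * t ^ 3 + 5 * t ^ 2 + t) ((t + 1) * (2 * t + 1))
          (t * (t + 1)) +
        A b a * walkPairWeight 0 (t + 1) t (2 * t ^ 2 + 2 * t) (2 * t ^ 2 + t)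
          (4 * t ^ 3 + 5 * t ^ 2 + t) (4 * t ^ 3 + 5 * t ^ 2 + 3 * t + 1) ((t + 1) * (2 * t + 1))
          (t * t) := fun a b => by
    have : P₃ a a = (t + 1) * (2 * t + 1) := by
      rw [h₃, h₂, hA, adjMatrix_self, if_pos rfl]; ring
    rw [this, hR', h₄, h₄, h₃, h₃, h₂, h₂]
    rcases eq_or_ne a b with rfl | hne
    · rw [hA, adjMatrix_self, if_pos rfl, if_pos rfl]
      simp only [walkPairWeight]
      ring
    · rw [if_neg hne, if_neg hne, if_neg hne.symm]
      have hab := T.total a b hne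
      by_cases hr : T.r b a
      · rw [hA, adjMatrix, adjMatrix, if_pos hr, if_neg (by tauto)]
        simp only [walkPairWeight]
        ring
      · rw [hA, adjMatrix, adjMatrix, if_neg hr, if_pos (by tauto)]
        simp only [walkPairWeight]
        ring
  rw [card_closedWalk_eight A T.r (fun i j => by rw [hA, adjMatrix]) T.irrefl
    (fun i j hij hji => (T.total i j (fun h => T.irrefl i (by rwa [← h] at hij))).1 hij hji)
    P₂ P₃ P₄ R hP₂ hP₃ hP₄ hR]
  have h₄' : ∀ a, P₄ a a = 2 * t * (t + 1) * (2 * t + 1) := fun a => by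
    rw [h₄, h₃, h₂, hA, adjMatrix_self, if_pos rfl]; ring
  simp only [key, h₄']
  simp only [Finset.sum_add_distrib, ← Finset.sum_mul, hA, Finset.sum_ite_eq,
    Finset.mem_univ, if_true, hT.sum_adjMatrix ht, hT.sum_adjMatrix_swap ht hV, Finset.sum_const,
    Finset.card_univ, hV, nsmul_eq_mul]
  simp only [walkPairWeight]
  push_cast
  ring

end Tournament

end DoublyRegular

theorem card_closedWalk_rltAdj {n : ℕ} (hodd : Odd n) :
    (Nat.card {γ : Fin 8 → ZMod n // Function.Injective γ ∧
        ∀ k, rltAdj n (γ k) (γ (k + 1))} : ℚ) =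
      ((n : ℚ) + 1) * n * (n - 1) * (n - 3) * (n - 7) *
        ((n - 5) * (83 * (n : ℚ) ^ 2 - 575 * n + 510)) / 20160 := by
  obtain ⟨h, rfl⟩ := hodd
  rw [card_closedWalk_rlt]
  push_cast
  ring

theorem Tournament.IsDoublyRegular.card_closedWalk_fin {n t : ℕ} {T : Tournament (Fin n)}
    (hT : T.IsDoublyRegular t) (hn : n = 4 * t + 3) (ht : t ≠ 0) :
    (Nat.card {γ : Fin 8 → Fin n // Function.Injective γ ∧ ∀ k, T.r (γ k) (γ (k + 1))} : ℚ) =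
      ((n : ℚ) + 1) * n * (n - 1) * (n - 3) * (n - 7) *
        ((n - 3) * ((n : ℚ) ^ 2 - 7 * n + 1)) / 256 := by
  rw [hT.card_closedWalk ht (by rw [Fintype.card_fin, hn]), hn]
  push_cast
  ring

theorem commonFactor_pos {n : ℕ} (hn : 9 ≤ n) :
    (0 : ℚ) < ((n : ℚ) + 1) * n * (n - 1) * (n - 3) * (n - 7) := by
  obtain ⟨m, rfl⟩ := Nat.exists_eq_add_of_le hn
  push_cast
  ring_nf
  positivity

theorem discriminating_cubic_pos {n : ℕ} (hn : 39 ≤ n) :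
    (0 : ℚ) < 17 * (n : ℚ) ^ 3 - 810 * n ^ 2 + 6610 * n - 9255 := by
  obtain ⟨m, rfl⟩ := Nat.exists_eq_add_of_le hn
  push_cast
  ring_nf
  positivity

theorem discriminating_cubic_neg {n : ℕ} (hn : 9 ≤ n) (hn' : n < 38) :
    17 * (n : ℚ) ^ 3 - 810 * n ^ 2 + 6610 * n - 9255 < 0 := by
  interval_cases n <;> norm_num

theorem numCycles_eight_lt {V W : Type*} {r : V → V → Prop} {s : W → W → Prop}
    (h : (Nat.card {γ : Fin 8 → V // Function.Injective γ ∧ ∀ k, r (γ k) (γ (k + 1))} : ℚ) + 8 ≤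
      Nat.card {γ : Fin 8 → W // Function.Injective γ ∧ ∀ k, s (γ k) (γ (k + 1))}) :
    numCycles r 8 < numCycles s 8 := by
  have h' : Nat.card {γ : Fin 8 → V // Function.Injective γ ∧ ∀ k, r (γ k) (γ (k + 1))} + 8 ≤
      Nat.card {γ : Fin 8 → W // Function.Injective γ ∧ ∀ k, s (γ k) (γ (k + 1))} := by
    exact_mod_cast h
  change Nat.card {γ : Fin 8 → V // Function.Injective γ ∧ ∀ k, r (γ k) (γ (k + 1))} / 8 <
    Nat.card {γ : Fin 8 → W // Function.Injective γ ∧ ∀ k, s (γ k) (γ (k + 1))} / 8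
  omega

theorem eight_cycles_DR_lt_RLT_iff (n : ℕ) (hodd : Odd n) (hn : 9 ≤ n) :
    ((((n : ℚ) + 1) * n * ((n : ℚ) - 1) * ((n : ℚ) - 3) ^ 2 * ((n : ℚ) - 7) *
          ((n : ℚ) ^ 2 - 7 * n + 1)) / 2048 <
        (((n : ℚ) + 1) * n * ((n : ℚ) - 1) * ((n : ℚ) - 3) * ((n : ℚ) - 5) *
          ((n : ℚ) - 7) * (83 * (n : ℚ) ^ 2 - 575 * n + 510)) / 161280 ↔ 39 ≤ n) ∧
    (∀ t : ℕ, ∀ T : Tournament (Fin n), n = 4 * t + 3 → T.IsDoublyRegular t →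
      (39 ≤ n → numCycles T.r 8 < numCycles (rltAdj n) 8) ∧
      (11 ≤ n → n ≤ 35 → numCycles (rltAdj n) 8 < numCycles T.r 8)) := by
  have hK := commonFactor_pos hn
  refine ⟨⟨fun hlt => ?_, fun h39 => ?_⟩, fun t T hnt hT => ?_⟩
  · by_contra h39
    have h38 : n < 38 := by
      obtain ⟨k, rfl⟩ := hodd
      omega
    linarith [mul_neg_of_pos_of_neg hK (discriminating_cubic_neg hn h38)]
  · linarith [mul_pos hK (discriminating_cubic_pos h39)]
  · have hR := card_closedWalk_rltAdj hodd
    have hD := hT.card_closedWalk_fin hnt (by omega)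
    refine ⟨fun h39 => numCycles_eight_lt ?_, fun h11 h35 => numCycles_eight_lt ?_⟩
    · rw [hR, hD]
      obtain ⟨m, rfl⟩ := Nat.exists_eq_add_of_le h39
      rw [← sub_nonneg]
      push_cast
      ring_nf
      positivity
    · rw [hR, hD]
      clear hR hD hT T hK hodd
      interval_cases n <;> norm_num
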